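/- Elliptic binomial coefficients via intertwining vectors: let k ≥ 1 and 0 ≤ n ≤ k be integers, let a, b, c ∈ ℤ with b − c = k − 2n and min(b,c) > k, assume r is irrational and u ∈ ℂ is such that every bracket appearing in a denominator (in the dual intertwining vectors along all paths from b to c and in C_n^k) is nonzero. Then Σ_{μ ∈ {−k,−k+2,…,k}} ψ*^{(k)}_μ(u)^c_b · ψ^{(k)}_μ(u)^a_{a+k} = C_n^k(α,β,γ), where α = (−u+a−k+1)/2, β = (−u+b−k+1)/2, γ = (−u−b−k+1)/2. -/

import Mathlib

noncomputable section

open Complex Finset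

namespace Ell

/-- `x^s = exp(-iπ s /(r τ))`. -/
def xp (τ : ℂ) (r : ℝ) (s : ℂ) : ℂ :=
  Complex.exp (-Complex.I * (Real.pi : ℂ) * s / ((r : ℂ) * τ))

/-- `Θ_p(z) = ∏_{j ≥ 0} (1 - z p^j)(1 - p^{j+1}/z)(1 - p^{j+1})`. -/
def Theta (p z : ℂ) : ℂ :=
  ∏' j : ℕ, ((1 - z * p ^ j) * (1 - p ^ (j + 1) / z) * (1 - p ^ (j + 1)))

/-- The bracket `[u] = x^{u²/r - u} Θ_p(x^{2u})` with `p = x^{2r}`. -/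
def br (τ : ℂ) (r : ℝ) (u : ℂ) : ℂ :=
  xp τ r (u ^ 2 / (r : ℂ) - u) * Theta (xp τ r (2 * (r : ℂ))) (xp τ r (2 * u))

/-- Elliptic shifted factorial `[u]_n = ∏_{j=0}^{n-1} [u+j]`. -/
def brF (τ : ℂ) (r : ℝ) (u : ℂ) (n : ℕ) : ℂ :=
  ∏ j ∈ Finset.range n, br τ r (u + (j : ℂ))

/-- Elliptic binomial coefficient `C_n^k(α,β,γ)`. -/
def Cnk (τ : ℂ) (r : ℝ) (k n : ℕ) (α β γ : ℂ) : ℂ :=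
  brF τ r 1 k / (brF τ r 1 n * brF τ r 1 (k - n)) *
    (brF τ r (α - γ) n * brF τ r (α + γ + (k : ℂ) - (n : ℂ)) n *
      brF τ r (α - β) (k - n) * brF τ r (α + β + (n : ℂ)) (k - n)) /
    (brF τ r (β - γ + (n : ℂ) - (k : ℂ)) n * brF τ r (γ - β - (n : ℂ)) (k - n) *
      brF τ r (β + γ) k)

/-- The elliptic 6j-symbol `R_n^m(α,β,γ,δ;k)`. -/
def Rnm (τ : ℂ) (r : ℝ) (k n m : ℕ) (α β γ δ : ℂ) : ℂ :=
  ∑ j ∈ Finset.range (min n m + 1),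
    Cnk τ r n j α γ (β + (k : ℂ) - (n : ℂ)) * Cnk τ r (k - j) (m - j) β (γ + (j : ℂ)) δ

/-- Terminating very-well-poised elliptic hypergeometric sum with explicit
truncation `N`:  `Σ_{j=0}^N ([u₀+2j]/[u₀]) ([u₀]_j/[1]_j) ∏ᵢ [uᵢ]_j/[u₀+1-uᵢ]_j`. -/
def Vsum (τ : ℂ) (r : ℝ) (u₀ : ℂ) (us : List ℂ) (N : ℕ) : ℂ :=
  ∑ j ∈ Finset.range (N + 1),
    br τ r (u₀ + 2 * (j : ℂ)) / br τ r u₀ * (brF τ r u₀ j / brF τ r 1 j) *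
      (us.map fun ui => brF τ r ui j / brF τ r (u₀ + 1 - ui) j).prod

/-- "Every bracket appearing in a denominator of `C_n^k(·,β,γ)` is nonzero". -/
def CdenomNZ (τ : ℂ) (r : ℝ) (k n : ℕ) (β γ : ℂ) : Prop :=
  brF τ r 1 n ≠ 0 ∧ brF τ r 1 (k - n) ≠ 0 ∧
    brF τ r (β - γ + (n : ℂ) - (k : ℂ)) n ≠ 0 ∧
    brF τ r (γ - β - (n : ℂ)) (k - n) ≠ 0 ∧ brF τ r (β + γ) k ≠ 0

/-- "Every bracket appearing in a denominator of `R_n^m(α,β,γ,δ;k)` is nonzero". -/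
def RdenomNZ (τ : ℂ) (r : ℝ) (k n m : ℕ) (β γ δ : ℂ) : Prop :=
  ∀ j ≤ min n m,
    CdenomNZ τ r n j γ (β + (k : ℂ) - (n : ℂ)) ∧
      CdenomNZ τ r (k - j) (m - j) (γ + (j : ℂ)) δ

/-- Jacobi theta `ϑ₁(v|σ)`. -/
def th1 (v σ : ℂ) : ℂ :=
  2 * Complex.exp (2 * (Real.pi : ℂ) * Complex.I * σ / 8) *
    (∏' n : ℕ, (1 - Complex.exp (2 * (Real.pi : ℂ) * Complex.I * σ) ^ (n + 1))) *
    Complex.sin ((Real.pi : ℂ) * v) *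
    ∏' n : ℕ,
      (1 - 2 * Complex.exp (2 * (Real.pi : ℂ) * Complex.I * σ) ^ (n + 1) *
            Complex.cos (2 * (Real.pi : ℂ) * v) +
        Complex.exp (2 * (Real.pi : ℂ) * Complex.I * σ) ^ (2 * (n + 1)))

/-- Jacobi theta `ϑ₀(v|σ)`. -/
def th0 (v σ : ℂ) : ℂ :=
  -Complex.I * Complex.exp ((Real.pi : ℂ) * Complex.I * (v + σ / 4)) * th1 (v + σ / 2) σ

/-- Jacobi theta `ϑ₂(v|σ)`. -/
def th2 (v σ : ℂ) : ℂ := th1 (v + 1 / 2) σ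

/-- Jacobi theta `ϑ₃(v|σ)`. -/
def th3 (v σ : ℂ) : ℂ :=
  Complex.exp ((Real.pi : ℂ) * Complex.I * (v + σ / 4)) * th1 (v + (σ + 1) / 2) σ

/-- Intertwining vector component `ψ_ε(u)^a_b`, `ε ∈ {1, -1}`. -/
def psi (τ : ℂ) (r : ℝ) (u : ℂ) (ε : ℤ) (a b : ℤ) : ℂ :=
  if ε = 1 then th0 ((((a : ℂ) - (b : ℂ)) * u + (a : ℂ)) / (2 * (r : ℂ))) (τ / 2)
  else th3 ((((a : ℂ) - (b : ℂ)) * u + (a : ℂ)) / (2 * (r : ℂ))) (τ / 2)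

/-- The constant `C = x^{-r/4} e^{-iπ/4} τ^{1/2}`. -/
def Cc (τ : ℂ) (r : ℝ) : ℂ :=
  xp τ r (-(r : ℂ) / 4) * Complex.exp (-(Real.pi : ℂ) * Complex.I / 4) * τ ^ (1 / 2 : ℂ)

/-- Dual intertwining vector component `ψ*_ε(u)^a_b = -ε(a-b) C² ψ_{-ε}(u-1)^a_b/(2[b][u])`. -/
def psiStar (τ : ℂ) (r : ℝ) (u : ℂ) (ε : ℤ) (a b : ℤ) : ℂ :=
  -(ε : ℂ) * ((a : ℂ) - (b : ℂ)) * Cc τ r ^ 2 * psi τ r (u - 1) (-ε) a b /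
    (2 * br τ r (b : ℂ) * br τ r u)

/-- Sign attached to a boolean. -/
def sg (b : Bool) : ℤ := if b then 1 else -1

/-- Canonical path from `a`: up for `j ≤ n`, down afterwards. -/
def cpathZ (a n : ℤ) (j : ℕ) : ℤ := if (j : ℤ) ≤ n then a + j else a + 2 * n - j

/-- Admissibility: `a - b ∈ {-k, -k+2, …, k}`. -/
def adm (k : ℕ) (a b : ℤ) : Prop := (a - b).natAbs ≤ k ∧ (a - b - (k : ℤ)) % 2 = 0

instance (k : ℕ) (a b : ℤ) : Decidable (adm k a b) := by unfold adm; infer_instance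

/-- Fused intertwining vector component `ψ^{(k)}_μ(u)^a_b` (zero if `a,b` not admissible). -/
def psiF (τ : ℂ) (r : ℝ) (k : ℕ) (μ : ℤ) (u : ℂ) (a b : ℤ) : ℂ :=
  if adm k a b then
    ∑ ε ∈ Finset.univ.filter fun ε : Fin k → Bool => (∑ j, sg (ε j)) = μ,
      ∏ j : Fin k,
        psi τ r (u + (k : ℂ) - (((j : ℕ) + 1 : ℕ) : ℂ)) (sg (ε j))
          (cpathZ a (((k : ℤ) - (a - b)) / 2) (j : ℕ))
          (cpathZ a (((k : ℤ) - (a - b)) / 2) ((j : ℕ) + 1))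
  else 0

/-- Partial-sum path attached to a sign sequence `δ`, starting at `a`. -/
def spath (k : ℕ) (a : ℤ) (δ : Fin k → Bool) (j : ℕ) : ℤ :=
  a + ∑ i ∈ Finset.range j, if h : i < k then sg (δ ⟨i, h⟩) else 0

/-- Fused dual intertwining vector component `ψ*^{(k)}_μ(u)^b_a`
(sum over all admissible paths from `a` to `b`; zero if not admissible). -/
def psiStarF (τ : ℂ) (r : ℝ) (k : ℕ) (μ : ℤ) (u : ℂ) (b a : ℤ) : ℂ :=
  if adm k a b then
    ∑ δ ∈ Finset.univ.filter fun δ : Fin k → Bool => (∑ j, sg (δ j)) = b - a,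
      ∏ j : Fin k,
        psiStar τ r (u + (k : ℂ) - (((j : ℕ) + 1 : ℕ) : ℂ))
          (if ((j : ℕ) + 1 : ℤ) ≤ ((k : ℤ) + μ) / 2 then 1 else -1)
          (spath k a δ ((j : ℕ) + 1)) (spath k a δ (j : ℕ))
  else 0

/-- The `L`-matrix `L^{(k)}(a,b;c,d|u) = Σ_μ ψ*^{(k)}_μ(u)^d_c ψ^{(k)}_μ(u)^a_b`. -/
def Lk (τ : ℂ) (r : ℝ) (k : ℕ) (u : ℂ) (a b c d : ℤ) : ℂ :=
  ∑ i ∈ Finset.range (k + 1),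
    psiStarF τ r k ((k : ℤ) - 2 * (i : ℤ)) u d c * psiF τ r k ((k : ℤ) - 2 * (i : ℤ)) u a b

/-- Normalized face weight `W̄(a,b;d,c|u)` (arguments ordered (NW, NE; SW, SE)). -/
def Wb (τ : ℂ) (r : ℝ) (u : ℂ) (a b d c : ℤ) : ℂ :=
  if b = a + 1 ∧ d = a + 1 ∧ c = a + 2 then 1
  else if b = a - 1 ∧ d = a - 1 ∧ c = a - 2 then 1
  else if b = a + 1 ∧ d = a + 1 ∧ c = a then
    br τ r ((a : ℂ) - u) * br τ r 1 / (br τ r (a : ℂ) * br τ r (1 + u))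
  else if b = a - 1 ∧ d = a - 1 ∧ c = a then
    br τ r ((a : ℂ) + u) * br τ r 1 / (br τ r (a : ℂ) * br τ r (1 + u))
  else if b = a + 1 ∧ d = a - 1 ∧ c = a then
    br τ r ((a : ℂ) + 1) * br τ r u / (br τ r (a : ℂ) * br τ r (1 + u))
  else if b = a - 1 ∧ d = a + 1 ∧ c = a then
    br τ r ((a : ℂ) - 1) * br τ r u / (br τ r (a : ℂ) * br τ r (1 + u))
  else 0

/-- Sequence with prescribed endpoints `d`, `c` and free interior values `f`. -/
def seqI (k : ℕ) (d c : ℤ) (f : Fin (k - 1) → ℤ) (j : ℕ) : ℤ :=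
  if h0 : j = 0 then d
  else if hj : j < k then f ⟨j - 1, by omega⟩ else c

/-- Fused face weight `W^{(k,1)}(a,b;d,c|u)`. -/
def Wk1 (τ : ℂ) (r : ℝ) (k : ℕ) (u : ℂ) (a b d c : ℤ) : ℂ :=
  if adm k a b then
    ∑' f : Fin (k - 1) → ℤ,
      ∏ j ∈ Finset.range k,
        Wb τ r (u + (k : ℂ) - ((j : ℂ) + 1))
          (cpathZ a (((k : ℤ) - (a - b)) / 2) j)
          (cpathZ a (((k : ℤ) - (a - b)) / 2) (j + 1))
          (seqI k d c f j) (seqI k d c f (j + 1))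
  else 0

/-- Fused face weight `W^{(k,l)}(a,b;d,c|u)`. -/
def Wkl (τ : ℂ) (r : ℝ) (k l : ℕ) (u : ℂ) (a b d c : ℤ) : ℂ :=
  if adm l b c then
    ∑' g : Fin (l - 1) → ℤ,
      ∏ i ∈ Finset.range l,
        Wk1 τ r k (u - (l : ℂ) + ((i : ℂ) + 1))
          (seqI l a d g i) (cpathZ b (((l : ℤ) - (b - c)) / 2) i)
          (seqI l a d g (i + 1)) (cpathZ b (((l : ℤ) - (b - c)) / 2) (i + 1))
  else 0

/-- Eight-vertex weight `ā(u)`. -/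
def aw (τ : ℂ) (r : ℝ) (u : ℂ) : ℂ :=
  th2 (1 / (2 * (r : ℂ))) (τ / 2) * th2 (u / (2 * (r : ℂ))) (τ / 2) /
    (th2 0 (τ / 2) * th2 ((1 + u) / (2 * (r : ℂ))) (τ / 2))

/-- Eight-vertex weight `b̄(u)`. -/
def bw (τ : ℂ) (r : ℝ) (u : ℂ) : ℂ :=
  th2 (1 / (2 * (r : ℂ))) (τ / 2) * th1 (u / (2 * (r : ℂ))) (τ / 2) /
    (th2 0 (τ / 2) * th1 ((1 + u) / (2 * (r : ℂ))) (τ / 2))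

/-- Eight-vertex weight `c̄(u)`. -/
def cw (τ : ℂ) (r : ℝ) (u : ℂ) : ℂ :=
  th1 (1 / (2 * (r : ℂ))) (τ / 2) * th2 (u / (2 * (r : ℂ))) (τ / 2) /
    (th2 0 (τ / 2) * th1 ((1 + u) / (2 * (r : ℂ))) (τ / 2))

/-- Eight-vertex weight `d̄(u)`. -/
def dw (τ : ℂ) (r : ℝ) (u : ℂ) : ℂ :=
  -(th1 (1 / (2 * (r : ℂ))) (τ / 2) * th1 (u / (2 * (r : ℂ))) (τ / 2)) /
    (th2 0 (τ / 2) * th2 ((1 + u) / (2 * (r : ℂ))) (τ / 2))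

/-- The normalized eight-vertex `R`-matrix entry `R̄(u)_{(ε₁,ε₂),(ε₁',ε₂')}`. -/
def Rbar (τ : ℂ) (r : ℝ) (u : ℂ) (e1 e2 e1' e2' : ℤ) : ℂ :=
  if e1' = e1 ∧ e2' = e2 ∧ e1 = e2 then aw τ r u
  else if e1' = e1 ∧ e2' = e2 ∧ e1 = -e2 then bw τ r u
  else if e1' = e2 ∧ e2' = e1 ∧ e1 = -e2 then cw τ r u
  else if e1' = -e1 ∧ e2' = -e2 ∧ e1 = e2 then dw τ r u
  else 0

/-- Sklyanin standard-basis vector `v_+(z)`. -/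
def vp (τ z : ℂ) : ℂ := th3 (2 * z) (2 * τ) - th2 (2 * z) (2 * τ)

/-- Sklyanin standard-basis vector `v_-(z)`. -/
def vm (τ z : ℂ) : ℂ := th3 (2 * z) (2 * τ) + th2 (2 * z) (2 * τ)


/-- finite q-factorial -/
def qP (p : ℂ) (m : ℕ) : ℂ := ∏ i ∈ Finset.range m, (1 - p ^ (i + 1))

/-- inverse q-factorial on integers -/
def qI (p : ℂ) (m : ℤ) : ℂ := if 0 ≤ m then (qP p m.toNat)⁻¹ else 0

lemma one_sub_pow_ne {p : ℂ} (hp : ‖p‖ < 1) (i : ℕ) : 1 - p ^ (i + 1) ≠ 0 := by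
  intro h
  have h1 : p ^ (i + 1) = 1 := (sub_eq_zero.mp h).symm
  have h2 : ‖p‖ ^ (i + 1) = 1 := by rw [← norm_pow, h1, norm_one]
  have h3 := pow_lt_one₀ (norm_nonneg p) hp (Nat.succ_ne_zero i)
  simp only [Nat.succ_eq_add_one] at h3
  linarith

lemma qP_ne {p : ℂ} (hp : ‖p‖ < 1) (m : ℕ) : qP p m ≠ 0 :=
  Finset.prod_ne_zero_iff.mpr fun i _ => one_sub_pow_ne hp i

lemma qI_rec {p : ℂ} (hp : ‖p‖ < 1) (m : ℤ) : qI p (m - 1) = (1 - p ^ m) * qI p m := by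
  rcases lt_trichotomy m 0 with h | h | h
  · simp [qI, show ¬ (1 ≤ m) by omega, show ¬ 0 ≤ m by omega]
  · subst h; simp [qI]
  · obtain ⟨j, rfl⟩ : ∃ j : ℕ, m = j + 1 := ⟨(m - 1).toNat, by omega⟩
    have e1 : ((j : ℤ) + 1 - 1).toNat = j := by omega
    have e2 : ((j : ℤ) + 1).toNat = j + 1 := by omega
    have h1 : qP p (j + 1) = qP p j * (1 - p ^ (j + 1)) := Finset.prod_range_succ _ _
    have h2 : p ^ ((j : ℤ) + 1) = p ^ (j + 1) := by exact_mod_cast zpow_natCast p (j + 1)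
    rw [qI, qI, if_pos (by omega), if_pos (by omega), e1, e2, h1, h2]
    have := one_sub_pow_ne hp j
    have := qP_ne hp j
    field_simp

/-- theta term -/
def tt (p z : ℂ) (n : ℤ) : ℂ := (-1) ^ n * p ^ (n * (n - 1) / 2) * z ^ n

lemma tt_succ {p z : ℂ} (hp : p ≠ 0) (hz : z ≠ 0) (n : ℤ) :
    tt p z (n + 1) = - (z * p ^ n) * tt p z n := by
  have h : (n + 1) * (n + 1 - 1) / 2 = n * (n - 1) / 2 + n := by
    rw [show (n + 1) * (n + 1 - 1) = n * (n - 1) + n * 2 by ring,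
      Int.add_mul_ediv_right _ _ (by norm_num)]
  unfold tt
  rw [h, zpow_add₀ (by norm_num : (-1 : ℂ) ≠ 0), zpow_add₀ hp, zpow_add₀ hz]
  simp
  ring

/-- finite JTP coefficients -/
def wN (p : ℂ) (N : ℕ) (n : ℤ) : ℂ := qP p (2 * N) * qI p (N - n) * qI p (N + n)

lemma wN_rec {p : ℂ} (hp : ‖p‖ < 1) (hp0 : p ≠ 0) (N : ℕ) (n : ℤ) :
    wN p (N + 1) n = (1 + p ^ (2 * N + 1)) * wN p N n
      + p ^ ((N : ℤ) + 1 - n) * wN p N (n - 1) + p ^ ((N : ℤ) + 1 + n) * wN p N (n + 1) := by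
  have hP : qP p (2 * (N + 1)) = qP p (2 * N) * (1 - p ^ (2 * N + 1)) * (1 - p ^ (2 * N + 2)) := by
    rw [show 2 * (N + 1) = 2 * N + 1 + 1 by ring, qP, Finset.prod_range_succ,
      Finset.prod_range_succ]; rfl
  have a1 := qI_rec hp ((N : ℤ) + 1 - n)
  have a2 := qI_rec hp ((N : ℤ) - n)
  have b1 := qI_rec hp ((N : ℤ) + 1 + n)
  have b2 := qI_rec hp ((N : ℤ) + n)
  rw [show (N : ℤ) + 1 - n - 1 = N - n by ring] at a1
  rw [show (N : ℤ) + 1 + n - 1 = N + n by ring] at b1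
  have hX : p ^ ((N : ℤ) + 1 - n) = p * p ^ ((N : ℤ) - n) := by
    rw [show (N : ℤ) + 1 - n = 1 + (N - n) by ring, zpow_add₀ hp0]; simp
  have hY : p ^ ((N : ℤ) + 1 + n) = p * p ^ ((N : ℤ) + n) := by
    rw [show (N : ℤ) + 1 + n = 1 + (N + n) by ring, zpow_add₀ hp0]; simp
  have hXY : p ^ (2 * N) = p ^ ((N : ℤ) - n) * p ^ ((N : ℤ) + n) := by
    rw [← zpow_add₀ hp0, ← zpow_natCast]; congr 1; push_cast; ring
  unfold wN
  rw [hP, show (N : ℤ) - (n - 1) = N + 1 - n by ring, show (N : ℤ) + (n - 1) = N + n - 1 by ring,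
    show (N : ℤ) - (n + 1) = N - n - 1 by ring, show (N : ℤ) + (n + 1) = N + 1 + n by ring,
    show ((N + 1 : ℕ) : ℤ) - n = N + 1 - n by push_cast; ring,
    show ((N + 1 : ℕ) : ℤ) + n = N + 1 + n by push_cast; ring,
    a2, b2, a1, b1, hX, hY, pow_succ, show p ^ (2 * N + 2) = p ^ (2 * N) * p * p by ring, hXY]
  ring

lemma finite_jtp {p z : ℂ} (hp : ‖p‖ < 1) (hp0 : p ≠ 0) (hz : z ≠ 0) (N : ℕ) :
    HasSum (fun n : ℤ => wN p N n * tt p z n)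
      (∏ j ∈ Finset.range N, ((1 - z * p ^ j) * (1 - p ^ (j + 1) / z))) := by
  induction N with
  | zero =>
    have := hasSum_single (f := fun n : ℤ => wN p 0 n * tt p z n) 0 (by
      intro n hn
      rcases lt_or_gt_of_ne hn with h | h
      · simp [wN, qI, show ¬ 0 ≤ n by omega]
      · simp [wN, qI, show ¬ n ≤ 0 by omega])
    simpa [wN, qI, qP, tt] using this
  | succ N ih =>
    rw [Finset.prod_range_succ]
    have h1 := ih.mul_left (1 + p ^ (2 * N + 1))
    have h2 := ((Equiv.subRight (1 : ℤ)).hasSum_iff.mpr ih).mul_left (-(z * p ^ N))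
    have h3 := ((Equiv.addRight (1 : ℤ)).hasSum_iff.mpr ih).mul_left (-(p ^ (N + 1) / z))
    convert (h1.add h2).add h3 using 1
    · rfl
    · funext n
      simp only [Function.comp, Equiv.subRight_apply, Equiv.coe_addRight]
      have t1 := tt_succ hp0 hz (n - 1)
      rw [sub_add_cancel] at t1
      rw [wN_rec hp hp0, tt_succ hp0 hz n, t1]
      have e1 : p ^ ((N : ℤ) + 1 - n) * p ^ (n - 1) = p ^ N := by
        rw [← zpow_add₀ hp0, ← zpow_natCast]; congr 1; ring
      have e2 : p ^ ((N : ℤ) + 1 + n) = p ^ (N + 1) * p ^ n := by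
        rw [zpow_add₀ hp0]; congr 1
      have e3 : p ^ (2 * N + 1) = p ^ N * p ^ (N + 1) := by ring
      have e4 : p ^ n = p * p ^ (n - 1) := by
        nth_rewrite 1 [show n = 1 + (n - 1) by ring]; rw [zpow_add₀ hp0, zpow_one]
      rw [e2, e4, ← e1]
      field_simp
      ring
    · generalize (∏ j ∈ range N, (1 - z * p ^ j) * (1 - p ^ (j + 1) / z)) = W
      field_simp
      ring

lemma summable_geo {p : ℂ} (hp : ‖p‖ < 1) (c : ℂ) : Summable fun j : ℕ => ‖c * p ^ j‖ := by
  simp only [norm_mul, norm_pow]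
  exact (summable_geometric_of_lt_one (norm_nonneg p) hp).mul_left _

lemma mult_geo {p : ℂ} (hp : ‖p‖ < 1) (c : ℂ) : Multipliable fun j : ℕ => 1 - c * p ^ j := by
  have := multipliable_one_add_of_summable (f := fun j : ℕ => (-c) * p ^ j) (summable_geo hp (-c))
  refine this.congr fun j => ?_
  ring

lemma mult1 {p : ℂ} (hp : ‖p‖ < 1) : Multipliable fun j : ℕ => 1 - p ^ (j + 1) := by
  refine (mult_geo hp p).congr fun j => ?_
  ring

lemma mult2 {p : ℂ} (hp : ‖p‖ < 1) (z : ℂ) : Multipliable fun j : ℕ => 1 - p ^ (j + 1) / z := by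
  refine (mult_geo hp (p / z)).congr fun j => ?_
  ring

lemma tprod1_ne {p : ℂ} (hp : ‖p‖ < 1) : ∏' j : ℕ, (1 - p ^ (j + 1)) ≠ 0 := by
  have := tprod_one_add_ne_zero_of_summable (f := fun j : ℕ => -p ^ (j + 1)) (by
    intro j
    have := one_sub_pow_ne hp j
    simpa [sub_eq_add_neg] using this) (by
    have := summable_geo hp p
    refine this.congr fun j => ?_
    rw [norm_neg, pow_succ', norm_mul])
  simpa [sub_eq_add_neg] using this

lemma jtp {p z : ℂ} (hp : ‖p‖ < 1) (hp0 : p ≠ 0) (hz : z ≠ 0)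
    (hs : Summable fun n : ℤ => ‖tt p z n‖) : Theta p z = ∑' n : ℤ, tt p z n := by
  set Pi : ℂ := ∏' j : ℕ, (1 - p ^ (j + 1)) with hPi
  have hPi0 : Pi ≠ 0 := tprod1_ne hp
  have hlim : Filter.Tendsto (qP p) Filter.atTop (nhds Pi) :=
    (mult1 hp).tendsto_prod_tprod_nat
  have hlimI : Filter.Tendsto (fun m : ℕ => (qP p m)⁻¹) Filter.atTop (nhds Pi⁻¹) :=
    hlim.inv₀ hPi0
  obtain ⟨B1, hB1⟩ := hlim.norm.bddAbove_range
  obtain ⟨B2, hB2⟩ := hlimI.norm.bddAbove_range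
  have hB1' : ∀ m, ‖qP p m‖ ≤ B1 := fun m => hB1 ⟨m, rfl⟩
  have hB2' : ∀ m, ‖(qP p m)⁻¹‖ ≤ B2 := fun m => hB2 ⟨m, rfl⟩
  have hB1n : 0 ≤ B1 := (norm_nonneg _).trans (hB1' 0)
  have hB2n : 0 ≤ B2 := (norm_nonneg _).trans (hB2' 0)
  have hqI : ∀ m, ‖qI p m‖ ≤ B2 := by
    intro m
    unfold qI
    split_ifs
    · exact hB2' _
    · simpa using hB2n
  have hqIlim : ∀ n : ℤ, Filter.Tendsto (fun N : ℕ => qI p (N + n)) Filter.atTop (nhds Pi⁻¹) := by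
    intro n
    have h1 : Filter.Tendsto (fun N : ℕ => ((N : ℤ) + n).toNat) Filter.atTop Filter.atTop := by
      refine Filter.tendsto_atTop.mpr fun b => ?_
      filter_upwards [Filter.eventually_ge_atTop (b + n.natAbs)] with N hN
      omega
    refine (hlimI.comp h1).congr' ?_
    filter_upwards [Filter.eventually_ge_atTop (n.natAbs)] with N hN
    simp only [Function.comp, qI]
    rw [if_pos (by omega)]
  have hT : Filter.Tendsto (fun N : ℕ => ∑' n : ℤ, wN p N n * tt p z n) Filter.atTop
      (nhds (∑' n : ℤ, (Pi * Pi⁻¹ * Pi⁻¹) * tt p z n)) := by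
    refine tendsto_tsum_of_dominated_convergence (bound := fun n => (B1 * B2 * B2) * ‖tt p z n‖)
      (hs.mul_left _) ?_ ?_
    · intro n
      refine Filter.Tendsto.mul_const _ ?_
      have h2 : Filter.Tendsto (fun N : ℕ => 2 * N) Filter.atTop Filter.atTop :=
        Filter.tendsto_atTop.mpr fun b => by
          filter_upwards [Filter.eventually_ge_atTop b] with N hN
          omega
      have := ((hlim.comp h2).mul (hqIlim (-n))).mul (hqIlim n)
      exact this
    · refine Filter.Eventually.of_forall fun N n => ?_
      rw [norm_mul]
      refine mul_le_mul_of_nonneg_right ?_ (norm_nonneg _)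
      unfold wN
      rw [norm_mul, norm_mul]
      exact mul_le_mul (mul_le_mul (hB1' _) (hqI _) (norm_nonneg _) hB1n) (hqI _) (norm_nonneg _)
        (mul_nonneg hB1n hB2n)
  have hm := ((mult_geo hp z).mul (mult2 hp z))
  have hT2 := hm.tendsto_prod_tprod_nat
  have heq := tendsto_nhds_unique hT (hT2.congr fun N => ((finite_jtp hp hp0 hz N).tsum_eq).symm)
  have : Theta p z = (∏' j : ℕ, ((1 - z * p ^ j) * (1 - p ^ (j + 1) / z))) * Pi := by
    rw [hPi, ← hm.tprod_mul (mult1 hp)]; rfl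
  rw [this, ← heq, tsum_mul_left]
  field_simp
lemma tt_eq (σ v : ℂ) (n : ℤ) :
    tt (cexp (2 * (Real.pi : ℂ) * I * σ)) (cexp (2 * (Real.pi : ℂ) * I * v)) n =
      jacobiTheta₂_term n (v + 1 / 2 - σ / 2) σ := by
  obtain ⟨m, hm⟩ := Int.even_mul_pred_self n
  have h1 : n * (n - 1) / 2 = m := by omega
  have hm' : (n : ℂ) * (n - 1) = m + m := by exact_mod_cast congrArg (Int.cast : ℤ → ℂ) hm
  unfold tt jacobiTheta₂_term
  rw [h1, ← Complex.exp_pi_mul_I, ← Complex.exp_int_mul, ← Complex.exp_int_mul,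
    ← Complex.exp_int_mul, ← Complex.exp_add, ← Complex.exp_add]
  congr 1
  have : (m : ℂ) = n * (n - 1) / 2 := by rw [hm']; ring
  rw [this]; ring

lemma norm_q_lt {σ : ℂ} (hσ : 0 < σ.im) : ‖cexp (2 * (Real.pi : ℂ) * I * σ)‖ < 1 := by
  rw [Complex.norm_exp, Real.exp_lt_one_iff]
  have : (2 * (Real.pi : ℂ) * I * σ).re = -(2 * Real.pi * σ.im) := by simp
  rw [this]
  have := mul_pos (mul_pos two_pos Real.pi_pos) hσ
  linarith

lemma Theta_eq {σ : ℂ} (hσ : 0 < σ.im) (v : ℂ) :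
    Theta (cexp (2 * (Real.pi : ℂ) * I * σ)) (cexp (2 * (Real.pi : ℂ) * I * v)) =
      jacobiTheta₂ (v + 1 / 2 - σ / 2) σ := by
  rw [jtp (norm_q_lt hσ) (exp_ne_zero _) (exp_ne_zero _)]
  · exact tsum_congr fun n => tt_eq σ v n
  · have := ((summable_jacobiTheta₂_term_iff (v + 1 / 2 - σ / 2) σ).mpr hσ).norm
    exact this.congr fun n => by rw [tt_eq]

lemma Theta_split {q z : ℂ} (hq : ‖q‖ < 1) (hz0 : z ≠ 0) (c : ℂ) (hc : 2 * c = z + z⁻¹) :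
    Theta q z = (1 - z) * (∏' n : ℕ, (1 - q ^ (n + 1))) *
      ∏' n : ℕ, (1 - 2 * q ^ (n + 1) * c + q ^ (2 * (n + 1))) := by
  unfold Theta
  have hm1 := mult_geo hq z
  have hm1s : Multipliable fun j : ℕ => 1 - z * q ^ (j + 1) := by
    refine (mult_geo hq (z * q)).congr fun j => ?_
    ring
  have hm2 := mult2 hq z
  have hm3 := mult1 hq
  have h0 : ∏' j : ℕ, (1 - z * q ^ j) = (1 - z * q ^ 0) * ∏' j : ℕ, (1 - z * q ^ (j + 1)) :=
    tprod_eq_zero_mul' (f := fun j : ℕ => 1 - z * q ^ j) hm1s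
  have h1 : ∏' j : ℕ, ((1 - z * q ^ j) * (1 - q ^ (j + 1) / z) * (1 - q ^ (j + 1))) =
      (∏' j : ℕ, (1 - z * q ^ j)) * (∏' j : ℕ, (1 - q ^ (j + 1) / z)) *
        ∏' j : ℕ, (1 - q ^ (j + 1)) := by
    rw [← hm1.tprod_mul hm2, ← (hm1.mul hm2).tprod_mul hm3]
  rw [h1, h0]
  have hc : ∀ n : ℕ, (1 - 2 * q ^ (n + 1) * c + q ^ (2 * (n + 1))) =
      (1 - z * q ^ (n + 1)) * (1 - q ^ (n + 1) / z) := by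
    intro n
    rw [show 2 * q ^ (n + 1) * c = q ^ (n + 1) * (z + z⁻¹) by rw [← hc]; ring]
    field_simp
    ring
  have h2 : ∏' n : ℕ, (1 - 2 * q ^ (n + 1) * c + q ^ (2 * (n + 1))) =
      (∏' j : ℕ, (1 - z * q ^ (j + 1))) * (∏' j : ℕ, (1 - q ^ (j + 1) / z)) := by
    rw [← hm1s.tprod_mul hm2]
    exact tprod_congr hc
  rw [h2, pow_zero, mul_one]
  ring

lemma th1_aux (σ v : ℂ) :
    2 * cexp (2 * (Real.pi : ℂ) * I * σ / 8) * Complex.sin ((Real.pi : ℂ) * v) =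
      I * cexp ((Real.pi : ℂ) * I * (σ / 4 - v)) * (1 - cexp (2 * (Real.pi : ℂ) * I * v)) := by
  have h1 : cexp (2 * (Real.pi : ℂ) * I * v) =
      cexp ((Real.pi : ℂ) * v * I) * cexp ((Real.pi : ℂ) * v * I) := by
    rw [← Complex.exp_add]; congr 1; ring
  have h2 : cexp ((Real.pi : ℂ) * I * (σ / 4 - v)) =
      cexp (2 * (Real.pi : ℂ) * I * σ / 8) * cexp (-((Real.pi : ℂ) * v) * I) := by
    rw [← Complex.exp_add]; congr 1; ring
  have h3 : cexp (-((Real.pi : ℂ) * v) * I) * cexp ((Real.pi : ℂ) * v * I) = 1 := by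
    rw [← Complex.exp_add]; simp
  rw [Complex.sin, h1, h2]
  generalize cexp (-((Real.pi : ℂ) * v) * I) = A at *
  generalize cexp ((Real.pi : ℂ) * v * I) = B at *
  generalize cexp (2 * (Real.pi : ℂ) * I * σ / 8) = C at *
  linear_combination (I * C * B) * h3

lemma th1_eq {σ : ℂ} (hσ : 0 < σ.im) (v : ℂ) :
    th1 v σ = I * cexp ((Real.pi : ℂ) * I * (σ / 4 - v)) *
      jacobiTheta₂ (v + 1 / 2 - σ / 2) σ := by
  rw [← Theta_eq hσ, Theta_split (norm_q_lt hσ) (exp_ne_zero _)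
    (Complex.cos (2 * (Real.pi : ℂ) * v))]
  · unfold th1
    have hs := th1_aux σ v
    generalize (∏' n : ℕ, (1 - cexp (2 * (Real.pi : ℂ) * I * σ) ^ (n + 1))) = P1
    generalize (∏' n : ℕ, (1 - 2 * cexp (2 * (Real.pi : ℂ) * I * σ) ^ (n + 1) *
      Complex.cos (2 * (Real.pi : ℂ) * v) + cexp (2 * (Real.pi : ℂ) * I * σ) ^ (2 * (n + 1)))) = P2
    linear_combination (P1 * P2) * hs
  · rw [Complex.cos, ← Complex.exp_neg, mul_div_cancel₀ _ (two_ne_zero)]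
    congr 2 <;> ring

lemma th0_eq {σ : ℂ} (hσ : 0 < σ.im) (v : ℂ) : th0 v σ = jacobiTheta₂ (v + 1 / 2) σ := by
  rw [th0, th1_eq hσ, show v + σ / 2 + 1 / 2 - σ / 2 = v + 1 / 2 by ring]
  have : cexp ((Real.pi : ℂ) * I * (v + σ / 4)) * cexp ((Real.pi : ℂ) * I * (σ / 4 - (v + σ / 2)))
      = 1 := by
    rw [← Complex.exp_add, Complex.exp_eq_one_iff]; exact ⟨0, by push_cast; ring⟩
  linear_combination (-I * I * jacobiTheta₂ (v + 1 / 2) σ) * this - jacobiTheta₂ (v + 1 / 2) σ * I_mul_I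

lemma th3_eq {σ : ℂ} (hσ : 0 < σ.im) (v : ℂ) : th3 v σ = jacobiTheta₂ v σ := by
  rw [th3, th1_eq hσ, show v + (σ + 1) / 2 + 1 / 2 - σ / 2 = v + 1 by ring, jacobiTheta₂_add_left]
  have : cexp ((Real.pi : ℂ) * I * (v + σ / 4)) *
      cexp ((Real.pi : ℂ) * I * (σ / 4 - (v + (σ + 1) / 2))) = -I := by
    rw [← Complex.exp_add, ← Complex.exp_neg_pi_div_two_mul_I]; congr 1; ring
  linear_combination (I * jacobiTheta₂ v σ) * this - jacobiTheta₂ v σ * I_mul_I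

/-- the odd theta series -/
def TT (v τ : ℂ) : ℂ :=
  cexp ((Real.pi : ℂ) * I * (τ / 4 + v)) * jacobiTheta₂ (v + τ / 2 + 1 / 2) τ

/-- its general term -/
def TTt (v τ : ℂ) (n : ℤ) : ℂ :=
  cexp ((Real.pi : ℂ) * I * (n + τ * (n + 1 / 2) ^ 2 + 2 * (n + 1 / 2) * v))

lemma TTt_eq (v τ : ℂ) (n : ℤ) : TTt v τ n = cexp ((Real.pi : ℂ) * I * (τ / 4 + v)) *
    jacobiTheta₂_term n (v + τ / 2 + 1 / 2) τ := by
  rw [TTt, jacobiTheta₂_term, ← Complex.exp_add]; congr 1; ring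

lemma TT_summable (v : ℂ) {τ : ℂ} (hτ : 0 < τ.im) : Summable fun n => ‖TTt v τ n‖ := by
  have := ((summable_jacobiTheta₂_term_iff (v + τ / 2 + 1 / 2) τ).mpr hτ).norm.mul_left
    ‖cexp ((Real.pi : ℂ) * I * (τ / 4 + v))‖
  exact this.congr fun n => by rw [TTt_eq, norm_mul]

lemma TT_tsum (v τ : ℂ) : TT v τ = ∑' n : ℤ, TTt v τ n := by
  rw [TT, jacobiTheta₂, ← tsum_mul_left]
  exact tsum_congr fun n => (TTt_eq v τ n).symm

lemma TT_neg (v τ : ℂ) : TT (-v) τ = - TT v τ := by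
  have h1 := jacobiTheta₂_add_left' (-v + τ / 2 + 1 / 2 - τ) τ
  rw [show -v + τ / 2 + 1 / 2 - τ + τ = -v + τ / 2 + 1 / 2 by ring] at h1
  have h2 := jacobiTheta₂_neg_left (-v + τ / 2 + 1 / 2 - τ) τ
  have h3 := jacobiTheta₂_add_left (-(-v + τ / 2 + 1 / 2 - τ)) τ
  rw [show -(-v + τ / 2 + 1 / 2 - τ) + 1 = v + τ / 2 + 1 / 2 by ring] at h3
  rw [TT, TT, h1, ← h2, ← h3, ← mul_assoc, ← neg_mul, ← Complex.exp_add]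
  congr 1
  have : -cexp ((Real.pi : ℂ) * I * (τ / 4 + v)) =
      cexp (-((Real.pi : ℂ) * I)) * cexp ((Real.pi : ℂ) * I * (τ / 4 + v)) := by
    rw [Complex.exp_neg, Complex.exp_pi_mul_I]; norm_num
  rw [this, ← Complex.exp_add]
  congr 1
  ring

lemma theta_det {τ : ℂ} (hτ : 0 < τ.im) (x y : ℂ) :
    th0 x (τ / 2) * th3 y (τ / 2) - th3 x (τ / 2) * th0 y (τ / 2) =
      -2 * (TT (x + y) τ * TT (x - y) τ) := by
  have hσ : 0 < (τ / 2).im := by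
    have : (τ / 2).im = τ.im / 2 := by simp
    rw [this]; linarith
  rw [th0_eq hσ, th3_eq hσ, th0_eq hσ, th3_eq hσ, TT_tsum, TT_tsum]
  have s1 := fun v => ((summable_jacobiTheta₂_term_iff v (τ / 2)).mpr hσ).norm
  unfold jacobiTheta₂
  rw [tsum_mul_tsum_of_summable_norm (s1 _) (s1 _), tsum_mul_tsum_of_summable_norm (s1 _) (s1 _),
    tsum_mul_tsum_of_summable_norm (TT_summable _ hτ) (TT_summable _ hτ),
    ← (summable_mul_of_summable_norm (s1 _) (s1 _)).tsum_sub
      (summable_mul_of_summable_norm (s1 _) (s1 _)), ← tsum_mul_left]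
  let e : ℤ × ℤ → ℤ × ℤ := fun q => (q.1 + q.2 + 1, q.1 - q.2)
  have he : Function.Injective e := by
    rintro ⟨a, b⟩ ⟨c, d⟩ h
    simp only [e, Prod.mk.injEq] at h ⊢
    omega
  have hm : ∀ (v : ℂ) (n : ℤ), jacobiTheta₂_term n (v + 1 / 2) (τ / 2) =
      (-1) ^ n * jacobiTheta₂_term n v (τ / 2) := by
    intro v n
    rw [jacobiTheta₂_term, jacobiTheta₂_term, ← Complex.exp_pi_mul_I, ← Complex.exp_int_mul,
      ← Complex.exp_add]
    congr 1; ring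
  rw [← he.tsum_eq]
  · refine tsum_congr fun q => ?_
    obtain ⟨S, D⟩ := q
    simp only [e, hm]
    have p1 : ((-1 : ℂ)) ^ (S + D + 1) = - cexp (Real.pi * I * (S + D)) := by
      rw [zpow_add₀ (by norm_num), zpow_one, ← Complex.exp_pi_mul_I, ← Complex.exp_int_mul]
      push_cast
      rw [Complex.exp_pi_mul_I, mul_neg_one]; congr 2; ring
    have p2 : ((-1 : ℂ)) ^ (S - D) = cexp (Real.pi * I * (S + D)) := by
      have : ((-1 : ℂ)) ^ (S - D) = (-1) ^ (S + D) := by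
        rw [show S + D = S - D + 2 * D by ring, zpow_add₀ (by norm_num), zpow_mul]; norm_num
      rw [this, ← Complex.exp_pi_mul_I, ← Complex.exp_int_mul]
      push_cast
      congr 1; ring
    rw [p1, p2]
    have : TTt (x + y) τ S * TTt (x - y) τ D = cexp (Real.pi * I * (S + D)) *
        (jacobiTheta₂_term (S + D + 1) x (τ / 2) * jacobiTheta₂_term (S - D) y (τ / 2)) := by
      rw [TTt, TTt, jacobiTheta₂_term, jacobiTheta₂_term, ← Complex.exp_add, ← Complex.exp_add,
        ← Complex.exp_add]
      congr 1
      push_cast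
      ring
    rw [this]
    ring
  · rintro ⟨m, n⟩ h
    rw [Function.mem_support] at h
    simp only [hm] at h
    by_cases hp : (m + n) % 2 = 0
    · exfalso
      apply h
      have : ((-1 : ℂ)) ^ m = (-1) ^ n := by
        obtain ⟨t, ht⟩ : ∃ t, m = n + 2 * t := ⟨(m - n) / 2, by omega⟩
        rw [ht, zpow_add₀ (by norm_num), zpow_mul]; norm_num
      rw [this]; ring
    · refine ⟨((m + n - 1) / 2, (m - n - 1) / 2), ?_⟩
      simp only [e, Prod.mk.injEq]
      omega

lemma br_eq {τ : ℂ} {r : ℝ} (hτ : 0 < τ.im) (hr : 0 < r) (u : ℂ) :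
    br τ r u = I * cexp ((Real.pi : ℂ) * I / (4 * τ)) * (-I * τ) ^ (1 / 2 : ℂ) * TT (-u / r) τ := by
  have hτ0 : τ ≠ 0 := by rintro rfl; simp at hτ
  have hr0 : (r : ℂ) ≠ 0 := by exact_mod_cast hr.ne'
  have hσ : 0 < (-1 / τ).im := by
    rw [neg_div, neg_im, one_div, inv_im, neg_div, neg_neg]
    exact div_pos hτ (Complex.normSq_pos.mpr hτ0)
  have e1 : xp τ r (2 * (r : ℂ)) = cexp (2 * (Real.pi : ℂ) * I * (-1 / τ)) := by
    rw [xp]; congr 1; field_simp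
  have e2 : xp τ r (2 * u) = cexp (2 * (Real.pi : ℂ) * I * (-u / (r * τ))) := by
    rw [xp]; congr 1; field_simp
  have hfe := jacobiTheta₂_functional_equation (-u / r + τ / 2 + 1 / 2) τ
  have hne : (-I * τ) ^ (1 / 2 : ℂ) ≠ 0 := by
    rw [Ne, Complex.cpow_eq_zero_iff]; simp [hτ0]
  rw [br, e1, e2, Theta_eq hσ, xp, TT, hfe,
    show -u / (r * τ) + 1 / 2 - -1 / τ / 2 = (-u / r + τ / 2 + 1 / 2) / τ by field_simp; ring]
  generalize jacobiTheta₂ ((-u / r + τ / 2 + 1 / 2) / τ) (-1 / τ) = J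
  have h3 : cexp (-I * Real.pi * (u ^ 2 / r - u) / (r * τ)) =
      I * (cexp ((Real.pi : ℂ) * I / (4 * τ)) * cexp ((Real.pi : ℂ) * I * (τ / 4 + -u / r)) *
        cexp (-Real.pi * I * (-u / r + τ / 2 + 1 / 2) ^ 2 / τ)) := by
    rw [← Complex.exp_add, ← Complex.exp_add]
    nth_rewrite 2 [← Complex.exp_pi_div_two_mul_I]
    rw [← Complex.exp_add]
    congr 1
    field_simp
    ring
  rw [h3]
  field_simp

lemma br_neg {τ : ℂ} {r : ℝ} (hτ : 0 < τ.im) (hr : 0 < r) (u : ℂ) : br τ r (-u) = - br τ r u := by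
  rw [br_eq hτ hr, br_eq hτ hr, show - -u / (r : ℂ) = -(-u / r) by ring, TT_neg]; ring

lemma Cc_sq {τ : ℂ} {r : ℝ} (hτ : 0 < τ.im) (hr : 0 < r) :
    Cc τ r ^ 2 = cexp ((Real.pi : ℂ) * I / (2 * τ)) * (-I * τ) := by
  have hτ0 : τ ≠ 0 := by rintro rfl; simp at hτ
  have hr0 : (r : ℂ) ≠ 0 := by exact_mod_cast hr.ne'
  have h1 : (τ ^ (1 / 2 : ℂ)) ^ 2 = τ := by
    simp
  rw [Cc, mul_pow, mul_pow, h1, xp, ← Complex.exp_nat_mul, ← Complex.exp_nat_mul, ← mul_assoc]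
  have e1 : ((2 : ℕ) : ℂ) * (-I * Real.pi * (-(r : ℂ) / 4) / (r * τ)) = Real.pi * I / (2 * τ) := by
    push_cast; field_simp; ring
  have e2 : ((2 : ℕ) : ℂ) * (-(Real.pi : ℂ) * I / 4) = -(Real.pi : ℂ) / 2 * I := by
    push_cast; ring
  rw [e1, e2, Complex.exp_neg_pi_div_two_mul_I]

lemma Cc_ne {τ : ℂ} {r : ℝ} (hτ : 0 < τ.im) (hr : 0 < r) : Cc τ r ^ 2 ≠ 0 := by
  have hτ0 : τ ≠ 0 := by rintro rfl; simp at hτ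
  rw [Cc_sq hτ hr]
  exact mul_ne_zero (exp_ne_zero _) (mul_ne_zero (neg_ne_zero.mpr I_ne_zero) hτ0)

/-- plus and minus components as functions -/
def pP (τ : ℂ) (r : ℝ) (X : ℂ) : ℂ := th0 (X / (2 * (r : ℂ))) (τ / 2)
def pM (τ : ℂ) (r : ℝ) (X : ℂ) : ℂ := th3 (X / (2 * (r : ℂ))) (τ / 2)

lemma key_det {τ : ℂ} {r : ℝ} (hτ : 0 < τ.im) (hr : 0 < r) (X Y : ℂ) :
    Cc τ r ^ 2 * (pP τ r X * pM τ r Y - pM τ r X * pP τ r Y) =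
      2 * (br τ r ((X + Y) / 2) * br τ r ((X - Y) / 2)) := by
  have hr0 : (r : ℂ) ≠ 0 := by exact_mod_cast hr.ne'
  unfold pP pM
  have a1 : br τ r ((X + Y) / 2) = - br τ r (-(X + Y) / 2) := by
    rw [← br_neg hτ hr]; congr 1; ring
  have a2 : br τ r ((X - Y) / 2) = - br τ r (-(X - Y) / 2) := by
    rw [← br_neg hτ hr]; congr 1; ring
  rw [theta_det hτ, a1, a2, br_eq hτ hr, br_eq hτ hr,
    show -(-(X + Y) / 2) / (r : ℂ) = X / (2 * r) + Y / (2 * r) by field_simp,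
    show -(-(X - Y) / 2) / (r : ℂ) = X / (2 * r) - Y / (2 * r) by field_simp]
  have h1 : ((-I * τ) ^ (1 / 2 : ℂ)) * ((-I * τ) ^ (1 / 2 : ℂ)) = -I * τ := by
    rw [← sq]; simp
  have h2 : cexp ((Real.pi : ℂ) * I / (4 * τ)) * cexp ((Real.pi : ℂ) * I / (4 * τ)) =
      cexp ((Real.pi : ℂ) * I / (2 * τ)) := by
    rw [← Complex.exp_add]; congr 1; ring
  rw [Cc_sq hτ hr, ← h2]
  nth_rewrite 1 [← h1]
  generalize cexp ((Real.pi : ℂ) * I / (4 * τ)) = E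
  generalize ((-I * τ) ^ (1 / 2 : ℂ)) = R
  linear_combination (-2 * E ^ 2 * R ^ 2 * (TT (X / (2 * r) + Y / (2 * r)) τ *
    TT (X / (2 * r) - Y / (2 * r)) τ)) * I_mul_I

lemma weier {τ : ℂ} {r : ℝ} (hτ : 0 < τ.im) (hr : 0 < r) (x y z w : ℂ) :
    br τ r (x + y) * br τ r (x - y) * (br τ r (z + w) * br τ r (z - w))
    - br τ r (x + z) * br τ r (x - z) * (br τ r (y + w) * br τ r (y - w))
    + br τ r (x + w) * br τ r (x - w) * (br τ r (y + z) * br τ r (y - z)) = 0 := by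
  have h : ∀ x y : ℂ, br τ r (x + y) * br τ r (x - y) = Cc τ r ^ 2 / 2 *
      (pP τ r (2 * x) * pM τ r (2 * y) - pM τ r (2 * x) * pP τ r (2 * y)) := by
    intro x y
    have := key_det hτ hr (2 * x) (2 * y)
    rw [show (2 * x + 2 * y) / 2 = x + y by ring, show (2 * x - 2 * y) / 2 = x - y by ring] at this
    linear_combination -(1 / 2) * this
  rw [h, h, h, h, h, h]
  ring
lemma brF_succ (τ : ℂ) (r : ℝ) (x : ℂ) (n : ℕ) :
    brF τ r x (n + 1) = brF τ r x n * br τ r (x + n) := Finset.prod_range_succ _ _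

lemma brF_succ' (τ : ℂ) (r : ℝ) (x : ℂ) (n : ℕ) :
    brF τ r x (n + 1) = br τ r x * brF τ r (x + 1) n := by
  unfold brF
  rw [Finset.prod_range_succ', mul_comm]
  congr 1
  · simp
  · refine Finset.prod_congr rfl fun j _ => ?_
    congr 1; push_cast; ring

/-- normalized closed form -/
def FF (τ : ℂ) (r : ℝ) (n m : ℕ) (h g b u : ℂ) : ℂ :=
  (-1) ^ m * brF τ r 1 (n + m) / (brF τ r 1 n * brF τ r 1 m) *
    (brF τ r h n * brF τ r (u - g) n * brF τ r g m * brF τ r (u - h) m) /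
    (brF τ r (b - m) n * brF τ r (b + n - m + 1) m * brF τ r u (n + m))

/-- elementary weights -/
def Lup (τ : ℂ) (r : ℝ) (U h g b : ℂ) : ℂ := br τ r h * br τ r (U - g) / (br τ r b * br τ r U)
def Ldn (τ : ℂ) (r : ℝ) (U h g b : ℂ) : ℂ := br τ r (h - U) * br τ r g / (br τ r b * br τ r U)

lemma alg_rec (W N1 M1 h0 H Gn xg g0 G Hm xh d0 D E e Un U K n1 m1 b y1 x1 y2 x2 sm : ℂ)
    (hN1 : N1 ≠ 0) (hM1 : M1 ≠ 0) (hn1 : n1 ≠ 0) (hm1 : m1 ≠ 0) (hd0 : d0 ≠ 0) (hD : D ≠ 0)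
    (hE : E ≠ 0) (he : e ≠ 0) (hUn : Un ≠ 0) (hU : U ≠ 0) (hb : b ≠ 0)
    (key : K * b * xg * xh = n1 * d0 * y1 * x1 + m1 * e * y2 * x2) :
    (sm * -1) * (W * K) / ((N1 * n1) * (M1 * m1)) * ((h0 * H) * (Gn * xg) * (g0 * G) * (Hm * xh)) /
      ((d0 * D) * (E * e) * (Un * U)) =
    (h0 * y1 / (b * U)) * ((sm * -1) * W / (N1 * (M1 * m1)) * (H * Gn * (g0 * G) * (x1 * Hm)) /
      (D * (E * e) * Un)) +
    (-y2 * g0 / (b * U)) * (sm * W / ((N1 * n1) * M1) * ((h0 * H) * (x2 * Gn) * G * Hm) /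
      ((d0 * D) * E * Un)) := by
  field_simp
  linear_combination (-(sm * W * h0 * H * Gn * g0 * G * Hm)) * key

lemma FF_rec {τ : ℂ} {r : ℝ} (hτ : 0 < τ.im) (hr : 0 < r) (n m : ℕ) (h g b u : ℂ) (hb : b = h - g)
    (h1 : brF τ r 1 (n + 1) ≠ 0) (h2 : brF τ r 1 (m + 1) ≠ 0)
    (h3 : brF τ r (b - (m + 1 : ℕ)) (n + 1) ≠ 0)
    (h4 : brF τ r (b + (n + 1 : ℕ) - (m + 1 : ℕ) + 1) (m + 1) ≠ 0)
    (h5 : brF τ r u (n + 1 + (m + 1)) ≠ 0) (h6 : br τ r b ≠ 0) :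
    FF τ r (n + 1) (m + 1) h g b u =
      Lup τ r (u + (n + 1 + m : ℕ)) h g b * FF τ r n (m + 1) (h + 1) g (b + 1) u +
      Ldn τ r (u + (n + 1 + m : ℕ)) h g b * FF τ r (n + 1) m h (g + 1) (b - 1) u := by
  unfold FF Lup Ldn
  rw [show n + 1 + (m + 1) = (n + 1 + m) + 1 by ring] at h5 ⊢
  rw [show n + (m + 1) = n + 1 + m by ring]
  rw [show b - ((m + 1 : ℕ) : ℂ) = b - m - 1 by push_cast; ring] at h3 ⊢
  rw [show b + ((n + 1 : ℕ) : ℂ) - (m + 1 : ℕ) + 1 = b + n - m + 1 by push_cast; ring] at h4 ⊢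
  rw [show b + 1 - ((m + 1 : ℕ) : ℂ) = b - m by push_cast; ring,
    show b + 1 + (n : ℂ) - (m + 1 : ℕ) + 1 = b + n - m + 1 by push_cast; ring,
    show b - 1 - (m : ℂ) = b - m - 1 by ring,
    show b - 1 + ((n + 1 : ℕ) : ℂ) - m + 1 = b + n - m + 1 by push_cast; ring]
  rw [brF_succ τ r 1 n] at h1
  rw [brF_succ τ r 1 m] at h2
  rw [brF_succ' τ r (b - m - 1) n, show b - m - 1 + 1 = b - m by ring] at h3
  rw [brF_succ τ r (b + n - m + 1) m, show b + n - m + 1 + m = b + n + 1 by ring] at h4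
  rw [brF_succ τ r u (n + 1 + m)] at h5
  rw [brF_succ τ r 1 (n + 1 + m), brF_succ τ r 1 n, brF_succ τ r 1 m, brF_succ' τ r h n,
    brF_succ τ r (u - g) n, brF_succ' τ r (u - (g + 1)) n, brF_succ' τ r g m,
    brF_succ τ r (u - h) m, brF_succ' τ r (u - (h + 1)) m, brF_succ' τ r (b - m - 1) n,
    show b - m - 1 + 1 = b - m by ring, brF_succ τ r (b + n - m + 1) m,
    show b + n - m + 1 + m = b + n + 1 by ring, brF_succ τ r u (n + 1 + m),
    show u - (g + 1) + 1 = u - g by ring, show u - (h + 1) + 1 = u - h by ring, pow_succ,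
    show h - (u + ((n + 1 + m : ℕ) : ℂ)) = -(u + ((n + 1 + m : ℕ) : ℂ) - h) by ring,
    br_neg hτ hr]
  refine alg_rec _ _ _ _ _ _ _ _ _ _ _ _ _ _ _ _ _ _ _ _ _ _ _ _ _ _
    (left_ne_zero_of_mul h1) (left_ne_zero_of_mul h2) (right_ne_zero_of_mul h1)
    (right_ne_zero_of_mul h2) (left_ne_zero_of_mul h3) (right_ne_zero_of_mul h3)
    (left_ne_zero_of_mul h4) (right_ne_zero_of_mul h4) (left_ne_zero_of_mul h5)
    (right_ne_zero_of_mul h5) h6 ?_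
  subst hb
  push_cast
  have w := weier hτ hr (((u - g - 1) + (u - h - 1) + (n + 1) + (m + 1)) / 2)
    (((u - g - 1) - (u - h - 1) + (n + 1) - (m + 1)) / 2)
    (((n + 1) + (m + 1) + (u - g - 1) - (u - h - 1)) / 2)
    (((n + 1) + (m + 1) - (u - g - 1) + (u - h - 1)) / 2)
  have o := br_neg hτ hr (1 + (m : ℂ))
  ring_nf at w o ⊢
  rw [o] at w
  linear_combination w

lemma FF_zero_left {τ : ℂ} {r : ℝ} (hτ : 0 < τ.im) (hr : 0 < r) (m : ℕ) (h g b u : ℂ)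
    (h2 : brF τ r 1 (m + 1) ≠ 0) :
    FF τ r 0 (m + 1) h g b u =
      Ldn τ r (u + (0 + m : ℕ)) h g b * FF τ r 0 m h (g + 1) (b - 1) u := by
  unfold FF Ldn
  rw [brF_succ τ r 1 m] at h2
  have h2a := left_ne_zero_of_mul h2
  have h2b := right_ne_zero_of_mul h2
  rw [Nat.zero_add, Nat.zero_add]
  rw [show b + ((0 : ℕ) : ℂ) - (m + 1 : ℕ) + 1 = b - m by push_cast; ring,
    show b - 1 + ((0 : ℕ) : ℂ) - m + 1 = b - m by push_cast; ring]
  have z : ∀ x, brF τ r x 0 = 1 := fun x => by simp [brF]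
  simp only [z]
  rw [brF_succ τ r 1 m, brF_succ' τ r g m,
    brF_succ τ r (u - h) m, brF_succ τ r (b - m) m, show b - (m : ℂ) + m = b by ring,
    brF_succ τ r u m,
    show h - (u + (m : ℂ)) = -(u - h + m) by ring, br_neg hτ hr, pow_succ]
  field_simp

lemma FF_zero_right {τ : ℂ} {r : ℝ} (n : ℕ) (h g b u : ℂ) (h1 : brF τ r 1 (n + 1) ≠ 0) :
    FF τ r (n + 1) 0 h g b u =
      Lup τ r (u + (n + 0 : ℕ)) h g b * FF τ r n 0 (h + 1) g (b + 1) u := by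
  unfold FF Lup
  rw [brF_succ τ r 1 n] at h1
  have h1a := left_ne_zero_of_mul h1
  have h1b := right_ne_zero_of_mul h1
  have z : ∀ x, brF τ r x 0 = 1 := fun x => by simp [brF]
  simp only [z, Nat.add_zero, Nat.cast_zero, sub_zero]
  rw [brF_succ τ r 1 n, brF_succ' τ r h n,
    brF_succ τ r (u - g) n, brF_succ' τ r b n, brF_succ τ r u n,
    show u + (n : ℂ) - g = u - g + n by ring]
  field_simp

lemma brF_neg {τ : ℂ} {r : ℝ} (hτ : 0 < τ.im) (hr : 0 < r) (x : ℂ) (n : ℕ) :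
    brF τ r (-x - n + 1) n = (-1) ^ n * brF τ r x n := by
  induction n with
  | zero => simp [brF]
  | succ n ih =>
    rw [brF_succ', brF_succ, show -x - ((n + 1 : ℕ) : ℂ) + 1 + 1 = -x - n + 1 by push_cast; ring, ih,
      show -x - ((n + 1 : ℕ) : ℂ) + 1 = -(x + n) by push_cast; ring, br_neg hτ hr]
    ring

lemma Cnk_eq_FF {τ : ℂ} {r : ℝ} (hτ : 0 < τ.im) (hr : 0 < r) (n m : ℕ) (a b u : ℂ) :
    Cnk τ r (n + m) n ((-u + a - ((n + m : ℕ) : ℂ) + 1) / 2) ((-u + b - ((n + m : ℕ) : ℂ) + 1) / 2)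
      ((-u - b - ((n + m : ℕ) : ℂ) + 1) / 2) = FF τ r n m ((a + b) / 2) ((a - b) / 2) b u := by
  unfold Cnk FF
  rw [Nat.add_sub_cancel_left]
  have e1 : (-u + a - ((n + m : ℕ) : ℂ) + 1) / 2 - (-u - b - ((n + m : ℕ) : ℂ) + 1) / 2 = (a + b) / 2 := by
    ring
  have e2 : (-u + a - ((n + m : ℕ) : ℂ) + 1) / 2 + (-u - b - ((n + m : ℕ) : ℂ) + 1) / 2 +
      ((n + m : ℕ) : ℂ) - n = -(u - (a - b) / 2) - n + 1 := by
    ring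
  have e3 : (-u + a - ((n + m : ℕ) : ℂ) + 1) / 2 - (-u + b - ((n + m : ℕ) : ℂ) + 1) / 2 = (a - b) / 2 := by
    ring
  have e4 : (-u + a - ((n + m : ℕ) : ℂ) + 1) / 2 + (-u + b - ((n + m : ℕ) : ℂ) + 1) / 2 + n =
      -(u - (a + b) / 2) - m + 1 := by
    push_cast; ring
  have e5 : (-u + b - ((n + m : ℕ) : ℂ) + 1) / 2 - (-u - b - ((n + m : ℕ) : ℂ) + 1) / 2 + n
      - ((n + m : ℕ) : ℂ) = b - m := by
    push_cast; ring
  have e6 : (-u - b - ((n + m : ℕ) : ℂ) + 1) / 2 - (-u + b - ((n + m : ℕ) : ℂ) + 1) / 2 - n =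
      -(b + n - m + 1) - m + 1 := by
    ring
  have e7 : (-u + b - ((n + m : ℕ) : ℂ) + 1) / 2 + (-u - b - ((n + m : ℕ) : ℂ) + 1) / 2 =
      -u - ((n + m : ℕ) : ℂ) + 1 := by
    ring
  rw [e1, e2, e3, e4, e5, e6, e7, brF_neg hτ hr, brF_neg hτ hr, brF_neg hτ hr, brF_neg hτ hr]
  rw [pow_add]
  have s1 : ((-1 : ℂ)) ^ n ≠ 0 := by simp
  have s2 : ((-1 : ℂ)) ^ m ≠ 0 := by simp
  have s3 : ((-1 : ℂ)) ^ m * (-1) ^ m = 1 := by rw [← mul_pow]; simp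
  have s4 : ((-1 : ℂ)) ^ n * (-1) ^ n = 1 := by rw [← mul_pow]; simp
  have d : ∀ A B C : ℂ, A * ((-1) ^ m * B) * ((-1) ^ n * (-1) ^ m * C) = (-1) ^ n * (A * B * C) := by
    intro A B C
    linear_combination (A * B * C * (-1) ^ n) * s3
  rw [d]
  have d2 : ∀ A B C D E : ℂ, E * (A * ((-1) ^ n * B) * C * ((-1) ^ m * D)) =
      (-1) ^ n * ((-1) ^ m * E * (A * B * C * D)) := by
    intros; ring
  rw [d2, mul_div_mul_left _ _ s1, ← mul_div_assoc]
lemma psi_true (τ : ℂ) (r : ℝ) (u : ℂ) (a b : ℤ) :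
    psi τ r u (sg true) a b = pP τ r (((a : ℂ) - b) * u + a) := by simp [psi, sg, pP]

lemma psi_false (τ : ℂ) (r : ℝ) (u : ℂ) (a b : ℤ) :
    psi τ r u (sg false) a b = pM τ r (((a : ℂ) - b) * u + a) := by simp [psi, sg, pM]

lemma psiStar_true (τ : ℂ) (r : ℝ) (U : ℂ) (b : ℤ) (s : Bool) :
    psiStar τ r U (sg true) (b + sg s) b =
      -(sg s : ℂ) * Cc τ r ^ 2 * pM τ r ((sg s : ℂ) * U + b) / (2 * br τ r b * br τ r U) := by
  rw [psiStar, show -sg true = sg false by simp [sg], psi_false]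
  have : ((b + sg s : ℤ) : ℂ) - b = sg s := by push_cast; ring
  rw [this, show (sg s : ℂ) * (U - 1) + ((b + sg s : ℤ) : ℂ) = sg s * U + b by push_cast; ring]
  have e : ((sg true : ℤ) : ℂ) = 1 := by simp [sg]
  rw [e]; ring

lemma psiStar_false (τ : ℂ) (r : ℝ) (U : ℂ) (b : ℤ) (s : Bool) :
    psiStar τ r U (sg false) (b + sg s) b =
      (sg s : ℂ) * Cc τ r ^ 2 * pP τ r ((sg s : ℂ) * U + b) / (2 * br τ r b * br τ r U) := by
  rw [psiStar, show -sg false = sg true by simp [sg], psi_true]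
  have : ((b + sg s : ℤ) : ℂ) - b = sg s := by push_cast; ring
  rw [this, show (sg s : ℂ) * (U - 1) + ((b + sg s : ℤ) : ℂ) = sg s * U + b by push_cast; ring]
  have e : ((sg false : ℤ) : ℂ) = -1 := by simp [sg]
  rw [e]; ring

/-- one step weight -/
def LL (τ : ℂ) (r : ℝ) (U : ℂ) (a c : ℤ) (s : Bool) : ℂ :=
  ∑ e : Bool, psiStar τ r U (sg e) (c + sg s) c * psi τ r U (sg e) a (a + 1)

lemma LL_gen {τ : ℂ} {r : ℝ} (hτ : 0 < τ.im) (hr : 0 < r) (U : ℂ) (a c : ℤ) (s : Bool) :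
    LL τ r U a c s = (sg s : ℂ) * (br τ r (((sg s : ℂ) * U + c + (-U + a)) / 2) *
      br τ r (((sg s : ℂ) * U + c - (-U + a)) / 2)) / (br τ r c * br τ r U) := by
  have k := key_det hτ hr ((sg s : ℂ) * U + c) (-U + a)
  have ha : ((a : ℂ) - ((a + 1 : ℤ) : ℂ)) * U + a = -U + a := by push_cast; ring
  rw [LL, Fintype.sum_bool, psiStar_true, psiStar_false, psi_true, psi_false, ha]
  have : br τ r (((sg s : ℂ) * U + c + (-U + a)) / 2) *
      br τ r (((sg s : ℂ) * U + c - (-U + a)) / 2) = Cc τ r ^ 2 * (pP τ r ((sg s : ℂ) * U + c) *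
        pM τ r (-U + a) - pM τ r ((sg s : ℂ) * U + c) * pP τ r (-U + a)) / 2 := by
    rw [k]; ring
  rw [this]
  ring

lemma LL_true {τ : ℂ} {r : ℝ} (hτ : 0 < τ.im) (hr : 0 < r) (U : ℂ) (a c : ℤ) :
    LL τ r U a c true = Lup τ r U (((a : ℂ) + c) / 2) (((a : ℂ) - c) / 2) c := by
  rw [LL_gen hτ hr, Lup]
  simp only [sg, if_true, Int.cast_one, one_mul]
  congr 3 <;> congr 1 <;> ring

lemma LL_false {τ : ℂ} {r : ℝ} (hτ : 0 < τ.im) (hr : 0 < r) (U : ℂ) (a c : ℤ) :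
    LL τ r U a c false = Ldn τ r U (((a : ℂ) + c) / 2) (((a : ℂ) - c) / 2) c := by
  rw [LL_gen hτ hr, Ldn]
  have e1 : ((sg false : ℤ) : ℂ) = -1 := by simp [sg]
  rw [e1, show ((-1 : ℂ) * U + c - (-U + a)) / 2 = -(((a : ℂ) - c) / 2) by ring, br_neg hτ hr,
    show ((-1 : ℂ) * U + c + (-U + a)) / 2 = ((a : ℂ) + c) / 2 - U by ring]
  ring

/-- path sum -/
def HH (τ : ℂ) (r : ℝ) (u : ℂ) : ℕ → ℤ → ℤ → ℤ → ℂ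
  | 0, _, b, c => if b = c then 1 else 0
  | k + 1, a, b, c => ∑ s : Bool, LL τ r (u + k) a b s * HH τ r u k (a + 1) (b + sg s) c

lemma HH_zero (τ : ℂ) (r : ℝ) (u : ℂ) (k : ℕ) (a b c : ℤ) (h : (k : ℤ) < |c - b|) :
    HH τ r u k a b c = 0 := by
  induction k generalizing a b with
  | zero =>
    have : b ≠ c := by rintro rfl; simp at h
    simp [HH, this]
  | succ k ih =>
    rw [HH, Fintype.sum_bool, ih, ih]
    · simp
    · simp only [sg]; push_cast at h; grind
    · simp only [sg]; push_cast at h; grind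

lemma brF_ne {τ : ℂ} {r : ℝ} {x : ℂ} {n : ℕ} (h : ∀ j < n, br τ r (x + j) ≠ 0) :
    brF τ r x n ≠ 0 := Finset.prod_ne_zero_iff.mpr fun j hj => h j (Finset.mem_range.mp hj)

lemma brF_mono {τ : ℂ} {r : ℝ} {x : ℂ} {n m : ℕ} (h : brF τ r x n ≠ 0) (hm : m ≤ n) :
    brF τ r x m ≠ 0 :=
  brF_ne fun j hj => Finset.prod_ne_zero_iff.mp h j (Finset.mem_range.mpr (hj.trans_le hm))

lemma HH_eq {τ : ℂ} {r : ℝ} (hτ : 0 < τ.im) (hr : 0 < r) (u : ℂ) (k n m : ℕ) (hk : k = n + m)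
    (a b : ℤ) (hb : ∀ s : ℤ, |s - b| ≤ (k : ℤ) → br τ r (s : ℂ) ≠ 0)
    (hu : brF τ r u k ≠ 0) (h1 : brF τ r 1 n ≠ 0) (h2 : brF τ r 1 m ≠ 0) :
    HH τ r u k a b (b + n - m) = FF τ r n m (((a : ℂ) + b) / 2) (((a : ℂ) - b) / 2) b u := by
  induction k generalizing n m a b with
  | zero =>
    obtain ⟨rfl, rfl⟩ : n = 0 ∧ m = 0 := by omega
    simp [HH, FF, brF]
  | succ k ih =>
    have hbp : ∀ s : ℤ, |s - (b + 1)| ≤ (k : ℤ) → br τ r (s : ℂ) ≠ 0 := by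
      intro s hs; apply hb; push_cast; grind
    have hbm : ∀ s : ℤ, |s - (b + -1)| ≤ (k : ℤ) → br τ r (s : ℂ) ≠ 0 := by
      intro s hs; apply hb; push_cast; grind
    have huk := brF_mono hu (Nat.le_succ k)
    rw [HH, Fintype.sum_bool, LL_true hτ hr, LL_false hτ hr]
    simp only [show sg true = 1 from rfl, show sg false = -1 from rfl]
    have ep : ∀ n' : ℕ, brF τ r 1 n' ≠ 0 → n = n' + 1 → HH τ r u k (a + 1) (b + 1) (b + n - m) =
        FF τ r n' m (((a : ℂ) + b) / 2 + 1) (((a : ℂ) - b) / 2) (b + 1) u := by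
      intro n' hn' e
      have := ih n' m (by omega) (a + 1) (b + 1) hbp huk hn' h2
      rw [show b + (n : ℤ) - m = b + 1 + n' - m by rw [e]; push_cast; ring, this]
      push_cast
      congr 1 <;> ring
    have em : ∀ m' : ℕ, brF τ r 1 m' ≠ 0 → m = m' + 1 → HH τ r u k (a + 1) (b + -1) (b + n - m) =
        FF τ r n m' (((a : ℂ) + b) / 2) (((a : ℂ) - b) / 2 + 1) (b - 1) u := by
      intro m' hm' e
      have := ih n m' (by omega) (a + 1) (b + -1) hbm huk h1 hm'
      rw [show b + (n : ℤ) - m = b + -1 + n - m' by rw [e]; push_cast; ring, this]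
      push_cast
      congr 1 <;> ring
    rcases n with _ | n
    · rcases m with _ | m
      · omega
      · obtain rfl : k = 0 + m := by omega
        rw [FF_zero_left hτ hr _ _ _ _ _ h2, HH_zero _ _ _ _ _ (b + 1),
          em m (brF_mono h2 (Nat.le_succ m)) rfl]
        · simp
        · rw [lt_abs]; right; push_cast; omega
    · rcases m with _ | m
      · have hkn : k = n + 0 := by omega
        subst hkn
        rw [FF_zero_right _ _ _ _ _ h1, ep k (brF_mono h1 (Nat.le_succ k)) rfl,
          HH_zero _ _ _ _ _ (b + -1)]
        · simp
        · rw [lt_abs]; left; push_cast; omega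
      · obtain rfl : k = n + 1 + m := by omega
        rw [ep n (brF_mono h1 (Nat.le_succ n)) rfl, em m (brF_mono h2 (Nat.le_succ m)) rfl]
        refine (FF_rec hτ hr n m _ _ _ u (by ring) h1 h2 ?_ ?_ hu ?_).symm
        · refine brF_ne fun j hj => ?_
          have := hb (b - (m + 1 : ℕ) + j) (by rw [abs_le]; push_cast; constructor <;> omega)
          push_cast at this ⊢
          exact this
        · refine brF_ne fun j hj => ?_
          have := hb (b + (n + 1 : ℕ) - (m + 1 : ℕ) + 1 + j) (by rw [abs_le]; push_cast; constructor <;> omega)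
          push_cast at this ⊢
          exact this
        · exact hb b (by simp; positivity)

/-- dual path sum attached to a sign list -/
def GLs (τ : ℂ) (r : ℝ) (u : ℂ) : List Bool → ℤ → ℤ → ℂ
  | [], b, c => if b = c then 1 else 0
  | e :: l, b, c => ∑ s : Bool, psiStar τ r (u + l.length) (sg e) (b + sg s) b *
      GLs τ r u l (b + sg s) c

lemma GLs_swap_aux {τ : ℂ} {r : ℝ} (hτ : 0 < τ.im) (hr : 0 < r) (u : ℂ) (l : List Bool) (b c : ℤ)
    (hp : br τ r ((b + 1 : ℤ) : ℂ) ≠ 0) (hm : br τ r ((b - 1 : ℤ) : ℂ) ≠ 0) :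
    GLs τ r u (true :: false :: l) b c = GLs τ r u (false :: true :: l) b c := by
  simp only [GLs, Fintype.sum_bool, psiStar_true, psiStar_false, List.length_cons]
  simp only [show sg true = 1 from rfl, show sg false = -1 from rfl]
  rw [show b + 1 + -1 = b by ring, show b + -1 + 1 = b by ring,
    show b + -1 = b - 1 by ring]
  have k1 := key_det hτ hr ((u + l.length + 1) + b) (-(u + l.length) + (b + 1))
  have k2 := key_det hτ hr (-(u + l.length + 1) + b) ((u + l.length) + (b - 1))
  rw [show ((u + l.length + 1) + b + (-(u + l.length) + (b + 1))) / 2 = ((b + 1 : ℤ) : ℂ) by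
      push_cast; ring,
    show ((u + l.length + 1) + b - (-(u + l.length) + (b + 1))) / 2 = u + l.length by ring] at k1
  rw [show (-(u + l.length + 1) + b + ((u + l.length) + (b - 1))) / 2 = ((b - 1 : ℤ) : ℂ) by
      push_cast; ring,
    show (-(u + l.length + 1) + b - ((u + l.length) + (b - 1))) / 2 = -(u + l.length) by ring,
    br_neg hτ hr] at k2
  push_cast at k1 k2 hp hm ⊢
  rw [show (1 : ℂ) * (u + (l.length + 1)) + b = u + l.length + 1 + b by ring,
    show (1 : ℂ) * (u + l.length) + (b + 1) = u + l.length + 1 + b by ring,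
    show (-1 : ℂ) * (u + l.length) + (b + 1) = -(u + l.length) + (b + 1) by ring,
    show (-1 : ℂ) * (u + (l.length + 1)) + b = -(u + l.length + 1) + b by ring,
    show (1 : ℂ) * (u + l.length) + (b - 1) = u + l.length + (b - 1) by ring,
    show (-1 : ℂ) * (u + l.length) + (b - 1) = -(u + l.length + 1) + b by ring]
  generalize pP τ r (u + l.length + 1 + b) = P1 at *
  generalize pM τ r (u + l.length + 1 + b) = M1 at *
  generalize pP τ r (-(u + l.length) + (b + 1)) = P2 at *
  generalize pM τ r (-(u + l.length) + (b + 1)) = M2 at *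
  generalize pP τ r (-(u + l.length + 1) + b) = P3 at *
  generalize pM τ r (-(u + l.length + 1) + b) = M3 at *
  generalize pP τ r (u + l.length + (b - 1)) = P4 at *
  generalize pM τ r (u + l.length + (b - 1)) = M4 at *
  generalize br τ r (b + 1) = Bp at *
  generalize br τ r (b - 1) = Bm at *
  generalize br τ r (u + l.length) = U at *
  generalize br τ r (u + (l.length + 1)) = U1 at *
  generalize br τ r b = B at *
  generalize Cc τ r ^ 2 = C at *
  generalize GLs τ r u l (b + 1 + 1) c = g1
  generalize GLs τ r u l (b - 1 + -1) c = g2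
  generalize GLs τ r u l b c = g3
  have k1' : C * (P1 * M2 - M1 * P2) / Bp = 2 * U := by rw [k1]; field_simp
  have k2' : C * (P3 * M4 - M3 * P4) / Bm = -2 * U := by rw [k2]; field_simp
  linear_combination (-(C * g3) / (4 * B * U * U1)) * (k1' + k2')

lemma GLs_perm {τ : ℂ} {r : ℝ} (hτ : 0 < τ.im) (hr : 0 < r) (u : ℂ) {l₁ l₂ : List Bool}
    (hl : l₁.Perm l₂) (b c : ℤ)
    (hb : ∀ s : ℤ, |s - b| ≤ (l₁.length : ℤ) → br τ r (s : ℂ) ≠ 0) :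
    GLs τ r u l₁ b c = GLs τ r u l₂ b c := by
  induction hl generalizing b with
  | nil => rfl
  | cons x h ih =>
    rw [GLs, GLs]
    refine Finset.sum_congr rfl fun s _ => ?_
    rw [h.length_eq, ih]
    intro t ht
    apply hb
    rw [List.length_cons]
    push_cast
    cases s <;> simp only [sg] at ht <;> grind
  | swap x y l =>
    have hp := hb (b + 1) (by simp only [List.length_cons]; push_cast; grind)
    have hm := hb (b - 1) (by simp only [List.length_cons]; push_cast; grind)
    cases x <;> cases y
    · rfl
    · exact GLs_swap_aux hτ hr u l b c hp hm
    · exact (GLs_swap_aux hτ hr u l b c hp hm).symm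
    · rfl
  | trans h1 h2 ih1 ih2 =>
    rw [ih1 b hb, ih2 b (by rw [← h1.length_eq]; exact hb)]

lemma spath_zero (k : ℕ) (a : ℤ) (δ : Fin k → Bool) : spath k a δ 0 = a := by simp [spath]

lemma spath_cons (k : ℕ) (a : ℤ) (s : Bool) (δ : Fin k → Bool) (j : ℕ) :
    spath (k + 1) a (Fin.cons s δ) (j + 1) = spath k (a + sg s) δ j := by
  unfold spath
  rw [Finset.sum_range_succ']
  have : ∀ i, (if h : i + 1 < k + 1 then sg ((Fin.cons s δ : Fin (k + 1) → Bool) ⟨i + 1, h⟩) else 0)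
      = if h : i < k then sg (δ ⟨i, h⟩) else 0 := by
    intro i
    by_cases h : i < k
    · rw [dif_pos h, dif_pos (by omega)]
      congr 1
    · rw [dif_neg h, dif_neg (by omega)]
  simp only [this]
  simp
  ring

lemma sum_cons {M : Type*} [AddCommMonoid M] (k : ℕ) (f : (Fin (k + 1) → Bool) → M) :
    ∑ δ, f δ = ∑ s : Bool, ∑ δ : Fin k → Bool, f (Fin.cons s δ) := by
  rw [← (Fin.consEquiv (fun _ : Fin (k + 1) => Bool)).sum_comp, Fintype.sum_prod_type]
  rfl

lemma dual_sum (τ : ℂ) (r : ℝ) (u : ℂ) (k : ℕ) (e : Fin k → Bool) (b c : ℤ) :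
    (∑ δ ∈ Finset.univ.filter fun δ : Fin k → Bool => (∑ j, sg (δ j)) = c - b,
      ∏ j : Fin k,
        psiStar τ r (u + (k : ℂ) - (((j : ℕ) + 1 : ℕ) : ℂ)) (sg (e j))
          (spath k b δ ((j : ℕ) + 1)) (spath k b δ (j : ℕ))) = GLs τ r u (List.ofFn e) b c := by
  induction k generalizing b with
  | zero =>
    simp only [Finset.sum_filter, List.ofFn_zero, GLs]
    simp [eq_comm, sub_eq_zero]
  | succ k ih =>
    rw [Finset.sum_filter, sum_cons, List.ofFn_succ, GLs]
    refine Finset.sum_congr rfl fun s _ => ?_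
    rw [← ih, Finset.mul_sum, Finset.sum_filter]
    refine Finset.sum_congr rfl fun δ _ => ?_
    rw [Fin.sum_univ_succ, Fin.prod_univ_succ]
    simp only [Fin.cons_zero, Fin.cons_succ, Fin.val_zero, Fin.val_succ, spath_cons, spath_zero,
      List.length_ofFn]
    have hc : sg s + ∑ j, sg (δ j) = c - b ↔ ∑ j, sg (δ j) = c - (b + sg s) := by
      constructor <;> intro h <;> linarith
    simp only [hc]
    split_ifs
    · congr 1
      · congr 1
        push_cast; ring
      · refine Finset.prod_congr rfl fun j _ => ?_
        congr 1
        push_cast; ring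
    · rfl

lemma sum_HH (τ : ℂ) (r : ℝ) (u : ℂ) (k : ℕ) (a b c : ℤ) :
    ∑ ε : Fin k → Bool, GLs τ r u (List.ofFn ε) b c *
      ∏ j : Fin k, psi τ r (u + (k : ℂ) - (((j : ℕ) + 1 : ℕ) : ℂ)) (sg (ε j))
        (a + ((j : ℕ) : ℤ)) (a + (((j : ℕ) + 1 : ℕ) : ℤ)) = HH τ r u k a b c := by
  induction k generalizing a b with
  | zero => simp [GLs, HH]
  | succ k ih =>
    rw [sum_cons, HH]
    simp only [← ih, LL, Finset.mul_sum, Finset.sum_mul]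
    have key : ∀ (e : Bool) (ε : Fin k → Bool),
        GLs τ r u (List.ofFn (Fin.cons e ε : Fin (k + 1) → Bool)) b c *
        ∏ j : Fin (k + 1), psi τ r (u + ((k + 1 : ℕ) : ℂ) - (((j : ℕ) + 1 : ℕ) : ℂ))
          (sg ((Fin.cons e ε : Fin (k + 1) → Bool) j))
          (a + ((j : ℕ) : ℤ)) (a + (((j : ℕ) + 1 : ℕ) : ℤ)) =
        ∑ s : Bool, psiStar τ r (u + k) (sg e) (b + sg s) b * psi τ r (u + k) (sg e) a (a + 1) *
          (GLs τ r u (List.ofFn ε) (b + sg s) c *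
            ∏ j : Fin k, psi τ r (u + (k : ℂ) - (((j : ℕ) + 1 : ℕ) : ℂ)) (sg (ε j))
              (a + 1 + ((j : ℕ) : ℤ)) (a + 1 + (((j : ℕ) + 1 : ℕ) : ℤ))) := by
      intro e ε
      rw [List.ofFn_succ, GLs, Fin.prod_univ_succ, Finset.sum_mul]
      refine Finset.sum_congr rfl fun s _ => ?_
      simp only [Fin.cons_zero, Fin.cons_succ, Fin.val_zero, Fin.val_succ, List.length_ofFn]
      have h0 : psi τ r (u + ((k + 1 : ℕ) : ℂ) - ((0 + 1 : ℕ) : ℂ)) (sg e) (a + ((0 : ℕ) : ℤ))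
          (a + ((0 + 1 : ℕ) : ℤ)) = psi τ r (u + k) (sg e) a (a + 1) := by
        congr 1 <;> push_cast <;> ring
      have h1 : ∀ j : Fin k, psi τ r (u + ((k + 1 : ℕ) : ℂ) - (((j : ℕ) + 1 + 1 : ℕ) : ℂ)) (sg (ε j))
          (a + (((j : ℕ) + 1 : ℕ) : ℤ)) (a + (((j : ℕ) + 1 + 1 : ℕ) : ℤ)) =
          psi τ r (u + (k : ℂ) - (((j : ℕ) + 1 : ℕ) : ℂ)) (sg (ε j))
              (a + 1 + ((j : ℕ) : ℤ)) (a + 1 + (((j : ℕ) + 1 : ℕ) : ℤ)) := by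
        intro j
        congr 1 <;> push_cast <;> ring
      simp only [h0, h1]
      ring
    simp only [key]
    simp only [Fintype.sum_bool, Finset.sum_add_distrib]
    ring

lemma sum_map_sg (l : List Bool) :
    (l.map sg).sum = 2 * (l.count true : ℤ) - l.length := by
  induction l with
  | nil => simp
  | cons e l ih =>
    cases e <;> simp [ih, sg] <;> ring

lemma perm_of_sum {l₁ l₂ : List Bool} (h : l₁.length = l₂.length)
    (hs : (l₁.map sg).sum = (l₂.map sg).sum) : l₁.Perm l₂ := by
  rw [sum_map_sg, sum_map_sg, h] at hs
  have ht : l₁.count true = l₂.count true := by omega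
  rw [List.perm_iff_count]
  intro e
  cases e
  · have h1 := List.count_false_add_count_true l₁
    have h2 := List.count_false_add_count_true l₂
    omega
  · exact ht

lemma sum_ofFn_sg (k : ℕ) (ε : Fin k → Bool) : ((List.ofFn ε).map sg).sum = ∑ j, sg (ε j) := by
  rw [List.map_ofFn, List.sum_ofFn]; rfl

lemma sum_decide (k i : ℕ) (hi : i ≤ k) :
    ∑ j : Fin k, sg (decide ((j : ℕ) < k - i)) = (k : ℤ) - 2 * i := by
  rw [Fin.sum_univ_eq_sum_range (fun j => sg (decide (j < k - i)))]
  obtain ⟨m, rfl⟩ := Nat.exists_eq_add_of_le' hi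
  rw [Finset.sum_range_add, Nat.add_sub_cancel]
  rw [Finset.sum_congr rfl (g := fun _ => (1 : ℤ)), Finset.sum_congr (s₁ := Finset.range i) rfl (g := fun _ => (-1 : ℤ))]
  · simp; ring
  · intro x _; simp [sg]
  · intro x hx; simp only [Finset.mem_range] at hx; simp [sg, hx]

lemma exists_idx (k : ℕ) (ε : Fin k → Bool) : ∃ i ≤ k, ∑ j, sg (ε j) = (k : ℤ) - 2 * i := by
  rw [← sum_ofFn_sg, sum_map_sg, List.length_ofFn]
  have := List.count_le_length (a := true) (l := List.ofFn ε)
  rw [List.length_ofFn] at this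
  exact ⟨k - (List.ofFn ε).count true, by omega, by omega⟩

lemma psiStarF_eq {τ : ℂ} {r : ℝ} (k : ℕ) (i : ℕ) (hi : i ≤ k) (u : ℂ) (b c : ℤ)
    (h : adm k b c) :
    psiStarF τ r k ((k : ℤ) - 2 * (i : ℤ)) u c b =
      GLs τ r u (List.ofFn fun j : Fin k => decide ((j : ℕ) < k - i)) b c := by
  rw [psiStarF, if_pos h, ← dual_sum]
  refine Finset.sum_congr rfl fun δ _ => Finset.prod_congr rfl fun j _ => ?_
  congr 1
  have e : ((k : ℤ) + ((k : ℤ) - 2 * i)) / 2 = k - i := by omega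
  rw [e]
  simp only [sg, decide_eq_true_eq]
  congr 1
  apply propext
  omega

lemma psiF_eq {τ : ℂ} {r : ℝ} (k : ℕ) (μ : ℤ) (u : ℂ) (a : ℤ) :
    psiF τ r k μ u a (a + k) =
      ∑ ε ∈ Finset.univ.filter fun ε : Fin k → Bool => (∑ j, sg (ε j)) = μ,
      ∏ j : Fin k, psi τ r (u + (k : ℂ) - (((j : ℕ) + 1 : ℕ) : ℂ)) (sg (ε j))
        (a + ((j : ℕ) : ℤ)) (a + (((j : ℕ) + 1 : ℕ) : ℤ)) := by
  have h : adm k a (a + k) := by constructor <;> omega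
  rw [psiF, if_pos h]
  have e : ((k : ℤ) - (a - (a + k))) / 2 = k := by omega
  rw [e]
  refine Finset.sum_congr rfl fun δ _ => Finset.prod_congr rfl fun j _ => ?_
  have := j.2
  rw [cpathZ, cpathZ, if_pos (by omega), if_pos (by omega)]

lemma total_eq {τ : ℂ} {r : ℝ} (hτ : 0 < τ.im) (hr : 0 < r) (k : ℕ) (u : ℂ) (a b c : ℤ)
    (h : adm k b c) (hb : ∀ s : ℤ, |s - b| ≤ (k : ℤ) → br τ r (s : ℂ) ≠ 0) :
    ∑ i ∈ Finset.range (k + 1),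
        psiStarF τ r k ((k : ℤ) - 2 * (i : ℤ)) u c b *
          psiF τ r k ((k : ℤ) - 2 * (i : ℤ)) u a (a + k) = HH τ r u k a b c := by
  rw [← sum_HH]
  have step : ∀ i ∈ Finset.range (k + 1),
      psiStarF τ r k ((k : ℤ) - 2 * (i : ℤ)) u c b *
          psiF τ r k ((k : ℤ) - 2 * (i : ℤ)) u a (a + k) =
      ∑ ε : Fin k → Bool, if (∑ j, sg (ε j)) = (k : ℤ) - 2 * (i : ℤ) then
        GLs τ r u (List.ofFn ε) b c *
      ∏ j : Fin k, psi τ r (u + (k : ℂ) - (((j : ℕ) + 1 : ℕ) : ℂ)) (sg (ε j))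
        (a + ((j : ℕ) : ℤ)) (a + (((j : ℕ) + 1 : ℕ) : ℤ)) else 0 := by
    intro i hi
    have hi' : i ≤ k := by rw [Finset.mem_range] at hi; omega
    rw [psiStarF_eq k i hi' u b c h, psiF_eq, Finset.mul_sum, Finset.sum_filter]
    refine Finset.sum_congr rfl fun ε _ => ?_
    split_ifs with hε
    · congr 1
      apply GLs_perm hτ hr
      · apply perm_of_sum
        · simp
        · rw [sum_ofFn_sg, sum_ofFn_sg, hε, sum_decide k i hi']
      · simpa using hb
    · rfl
  rw [Finset.sum_congr rfl step, Finset.sum_comm]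
  refine Finset.sum_congr rfl fun ε _ => ?_
  obtain ⟨i, hi, he⟩ := exists_idx k ε
  rw [Finset.sum_eq_single i]
  · rw [if_pos he]
  · intro j _ hj
    rw [if_neg]
    rw [he]
    omega
  · intro hh
    exact absurd (Finset.mem_range.mpr (by omega)) hh

/-- Elliptic binomial coefficients via intertwining vectors. -/
theorem binomial_coeff_via_intertwiners (τ : ℂ) (r : ℝ) (hτ : 0 < τ.im) (hr : 0 < r)
    (hirr : Irrational r) (k n : ℕ) (hk : 1 ≤ k) (hn : n ≤ k)
    (a b c : ℤ) (hbc : b - c = (k : ℤ) - 2 * n) (hmin : (k : ℤ) < min b c)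
    (u : ℂ)
    (hb : ∀ s : ℤ, |s - b| ≤ (k : ℤ) → br τ r (s : ℂ) ≠ 0)
    (hu : ∀ j : ℕ, j < k → br τ r (u + (j : ℂ)) ≠ 0)
    (hC : CdenomNZ τ r k n ((-u + (b : ℂ) - (k : ℂ) + 1) / 2)
      ((-u - (b : ℂ) - (k : ℂ) + 1) / 2)) :
    ∑ i ∈ Finset.range (k + 1),
        psiStarF τ r k ((k : ℤ) - 2 * (i : ℤ)) u c b *
          psiF τ r k ((k : ℤ) - 2 * (i : ℤ)) u a (a + k) =
      Cnk τ r k n ((-u + (a : ℂ) - (k : ℂ) + 1) / 2) ((-u + (b : ℂ) - (k : ℂ) + 1) / 2)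
        ((-u - (b : ℂ) - (k : ℂ) + 1) / 2) := by
  obtain ⟨m, rfl⟩ := Nat.exists_eq_add_of_le hn
  obtain ⟨h1, h2, -⟩ := hC
  rw [Nat.add_sub_cancel_left] at h2
  rw [total_eq hτ hr _ u a b c (by constructor <;> omega) hb, Cnk_eq_FF hτ hr,
    ← HH_eq hτ hr u (n + m) n m rfl a b hb (brF_ne hu) h1 h2]
  congr 1
  push_cast at hbc
  linarith

end Ell
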